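/- There exists an absolute constant $C>0$ such that the following holds. Let $\lambda\ge1$ and $N\ge M\ge1$. Let $a:\mathbb{Z}\to\mathbb{C}$ be finitely supported with $a(n)=0$ unless $|n|\le M\lambda$, and set $u(t,x)=\sum_{n\in\mathbb{Z}}a(n)\,e^{i(nx/\lambda-n^2t/\lambda^2)}$. Then $\Big(\int_0^{\lambda/N}\int_0^{2\pi\lambda}|u(t,x)|^6\,dx\,dt\Big)^{1/6}\le C\Big(\int_0^{2\pi\lambda}|u(0,x)|^2dx\Big)^{1/2}$. -/

import Mathlib

open MeasureTheory Real

/-!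
Parabolic rescaling reduces the estimate to the circle of period `2π`, with frequencies in a window
of length `O(L)` and times `0 ≤ t ≤ 1/L`. There the Dirichlet kernel `D(t) = ∑ j < L, e^{ijt}` has
modulus at least `L/2`, so `∬ |u|⁶ ≤ 4 L⁻² ∬ |D u³|²`, where the right-hand side may be integrated
over the full torus. By Parseval and Cauchy-Schwarz the latter is controlled by the number of
`(j, n₀, n₁, n₂)` for which `k = n₀ + n₁ + n₂` and `l = j - (n₀² + n₁² + n₂²)` are prescribed.
Since `(2n₀ - n₁ - n₂)² + 3 (n₁ - n₂)² = 6 (j - l) - 2k²`, these give lattice points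
of size `O(L)` on which the form `x² + 3z²` varies by at most `6L`; there are only `O(L)` of them,
which balances `L⁻²` against the `L` terms of `D`.
-/

section Counting
open scoped Finset

variable {α β H : ℕ}

lemma mul_le_two_mul_of_quadratic_gap {x z d x₀ z₀ : ℕ} (hβ : 1 ≤ β) (hαβ : α + β ≤ 4)
    (hxz : x ≤ z) (hgap : α * x ^ 2 + β * (z + d) ^ 2 ≤ α * x ^ 2 + β * z ^ 2 + H)
    (hbase : α * x₀ ^ 2 + β * z₀ ^ 2 ≤ α * x ^ 2 + β * z ^ 2 + H) : d * z₀ ≤ 2 * H := by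
  have hd : d * (2 * z + d) ≤ H := by
    have : 1 * (d * (2 * z + d)) ≤ β * (d * (2 * z + d)) := by gcongr
    linarith
  have hz₀ : z₀ ^ 2 ≤ 4 * z ^ 2 + H := by
    calc z₀ ^ 2 = 0 + 1 * z₀ ^ 2 := by ring
      _ ≤ α * x₀ ^ 2 + β * z₀ ^ 2 := by gcongr; exact Nat.zero_le _
      _ ≤ α * z ^ 2 + β * z ^ 2 + H := hbase.trans (by gcongr)
      _ = (α + β) * z ^ 2 + H := by ring
      _ ≤ 4 * z ^ 2 + H := by gcongr
  refine (Nat.pow_le_pow_iff_left two_ne_zero).1 ?_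
  calc (d * z₀) ^ 2 ≤ d ^ 2 * (4 * z ^ 2 + H) := by rw [mul_pow]; gcongr
    _ = (d * (2 * z)) ^ 2 + d * d * H := by ring
    _ ≤ H ^ 2 + H * H := by
        gcongr
        · exact (Nat.mul_le_mul_left d (Nat.le_add_right _ _)).trans hd
        · exact (Nat.mul_le_mul_left d (Nat.le_add_left _ _)).trans hd
    _ ≤ (2 * H) ^ 2 := by linarith [Nat.zero_le (H ^ 2)]

lemma card_le_of_forall_le_add {S : Finset ℕ} {D : ℕ} (h : ∀ m ∈ S, ∀ n ∈ S, n ≤ m + D) :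
    #S ≤ D + 1 := by
  obtain rfl | hS := S.eq_empty_or_nonempty
  · simp
  have hsub : S ⊆ Finset.Icc (S.min' hS) (S.min' hS + D) := fun n hn =>
    Finset.mem_Icc.2 ⟨S.min'_le n hn, h _ (S.min'_mem hS) n hn⟩
  calc #S ≤ #(Finset.Icc (S.min' hS) (S.min' hS + D)) := Finset.card_le_card hsub
    _ = D + 1 := by rw [Nat.card_Icc]; omega

lemma card_le_of_quadratic_variation_le_of_sector (hβ : 1 ≤ β) (hαβ : α + β ≤ 4)
    (S : Finset (ℕ × ℕ)) (hsector : ∀ p ∈ S, p.1 ≤ p.2) (hH : ∀ p ∈ S, p.1 ≤ H)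
    (hvar : ∀ p ∈ S, ∀ q ∈ S, α * q.1 ^ 2 + β * q.2 ^ 2 ≤ α * p.1 ^ 2 + β * p.2 ^ 2 + H) :
    #S ≤ 5 * H + 1 := by
  obtain rfl | hS := S.eq_empty_or_nonempty
  · simp
  obtain ⟨⟨x₀, z₀⟩, hp₀, hmax⟩ := S.exists_max_image Prod.snd hS
  let D := 2 * H / z₀
  have gap_le {x z z' : ℕ} (hp : (x, z) ∈ S) (hp' : (x, z') ∈ S) : z' ≤ z + D := by
    obtain hz'z | ⟨d, rfl⟩ := (le_total z' z).imp_right Nat.exists_eq_add_of_le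
    · exact hz'z.trans (Nat.le_add_right _ _)
    obtain rfl | hz₀ := Nat.eq_zero_or_pos z₀
    · exact (hmax _ hp').trans (Nat.zero_le _)
    · have := mul_le_two_mul_of_quadratic_gap hβ hαβ (hsector _ hp) (hvar _ hp _ hp')
        (hvar _ hp _ hp₀)
      exact Nat.add_le_add_left ((Nat.le_div_iff_mul_le hz₀).2 this) z
  have fiber_card : ∀ x ∈ S.image Prod.fst, #{p ∈ S | p.1 = x} ≤ D + 1 := by
    intro x _
    have snd_injOn : Set.InjOn Prod.snd {p ∈ S | p.1 = x} := fun p hp q hq hpq =>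
      Prod.ext (hp.2.trans hq.2.symm) hpq
    rw [← Finset.card_image_of_injOn (by simpa only [Finset.coe_filter] using snd_injOn)]
    refine card_le_of_forall_le_add ?_
    simp only [Finset.forall_mem_image, Finset.mem_filter]
    rintro ⟨_, z⟩ ⟨hp, rfl⟩ ⟨_, z'⟩ ⟨hp', rfl⟩
    exact gap_le hp hp'
  have image_card : #(S.image Prod.fst) ≤ min H z₀ + 1 := by
    rw [← Finset.card_range (min H z₀ + 1)]
    refine Finset.card_le_card (Finset.image_subset_iff.2 fun p hp => ?_)
    exact Finset.mem_range_succ_iff.2 (le_min (hH p hp) ((hsector p hp).trans (hmax p hp)))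
  have hDz₀ : D * z₀ ≤ 2 * H := Nat.div_mul_le_self _ _
  have hDH : D ≤ 2 * H := Nat.div_le_self _ _
  calc #S ≤ (D + 1) * #(S.image Prod.fst) := Finset.card_le_mul_card_image S _ fiber_card
    _ ≤ D * (z₀ + 1) + (H + 1) := by
        rw [add_one_mul]
        gcongr
        · exact image_card.trans (by gcongr; exact min_le_right _ _)
        · exact image_card.trans (by gcongr; exact min_le_left _ _)
    _ ≤ 5 * H + 1 := by linarith

lemma card_le_of_quadratic_variation_le_nat (hα : 1 ≤ α) (hβ : 1 ≤ β) (hαβ : α + β ≤ 4)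
    (S : Finset (ℕ × ℕ)) (hH : ∀ p ∈ S, p.1 ≤ H ∧ p.2 ≤ H)
    (hvar : ∀ p ∈ S, ∀ q ∈ S, α * q.1 ^ 2 + β * q.2 ^ 2 ≤ α * p.1 ^ 2 + β * p.2 ^ 2 + H) :
    #S ≤ 10 * H + 2 := by
  have upper : #{p ∈ S | p.1 ≤ p.2} ≤ 5 * H + 1 := by
    refine card_le_of_quadratic_variation_le_of_sector hβ hαβ _
      (fun p hp => (Finset.mem_filter.1 hp).2) (fun p hp => (hH p (Finset.mem_filter.1 hp).1).1)
      fun p hp q hq => hvar p (Finset.mem_filter.1 hp).1 q (Finset.mem_filter.1 hq).1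
  have lower : #{p ∈ S | ¬ p.1 ≤ p.2} ≤ 5 * H + 1 := by
    rw [← Finset.card_map (Equiv.prodComm ℕ ℕ).toEmbedding]
    refine card_le_of_quadratic_variation_le_of_sector hα ((add_comm β α).trans_le hαβ) _ ?_ ?_ ?_
    all_goals simp only [Finset.forall_mem_map, Equiv.coe_toEmbedding, Equiv.prodComm_apply,
      Prod.fst_swap, Prod.snd_swap]
    · exact fun p hp => (not_le.1 (Finset.mem_filter.1 hp).2).le
    · exact fun p hp => (hH p (Finset.mem_filter.1 hp).1).2
    · intro p hp q hq
      have := hvar p (Finset.mem_filter.1 hp).1 q (Finset.mem_filter.1 hq).1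
      linarith
  rw [← Finset.card_filter_add_card_filter_not (fun p : ℕ × ℕ => p.1 ≤ p.2)]
  linarith

lemma card_le_of_quadratic_variation_le_int (hα : 1 ≤ α) (hβ : 1 ≤ β) (hαβ : α + β ≤ 4)
    (S : Finset (ℤ × ℤ)) (hH : ∀ p ∈ S, |p.1| ≤ H ∧ |p.2| ≤ H)
    (hvar : ∀ p ∈ S, ∀ q ∈ S, α * q.1 ^ 2 + β * q.2 ^ 2 ≤ α * p.1 ^ 2 + β * p.2 ^ 2 + H) :
    #S ≤ 40 * H + 8 := by
  let fold : ℤ × ℤ → ℕ × ℕ := Prod.map Int.natAbs Int.natAbs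
  have fiber_card : ∀ r ∈ S.image fold, #{p ∈ S | fold p = r} ≤ 4 := by
    rintro ⟨x, z⟩ -
    have hsub : {p ∈ S | fold p = (x, z)} ⊆ ({(x : ℤ), -(x : ℤ)} ×ˢ {(z : ℤ), -(z : ℤ)}) := by
      intro p hp
      obtain ⟨hx, hz⟩ := Prod.ext_iff.1 (Finset.mem_filter.1 hp).2
      simpa only [Finset.mem_product, Finset.mem_insert, Finset.mem_singleton]
        using ⟨Int.natAbs_eq_iff.1 hx, Int.natAbs_eq_iff.1 hz⟩
    refine (Finset.card_le_card hsub).trans ?_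
    rw [Finset.card_product]
    exact Nat.mul_le_mul Finset.card_le_two Finset.card_le_two
  have image_card : #(S.image fold) ≤ 10 * H + 2 := by
    refine card_le_of_quadratic_variation_le_nat hα hβ hαβ _ ?_ ?_
    all_goals simp only [Finset.forall_mem_image]
    · intro p hp
      obtain ⟨hx, hz⟩ := hH p hp
      rw [Int.abs_eq_natAbs] at hx hz
      exact ⟨Int.ofNat_le.1 hx, Int.ofNat_le.1 hz⟩
    · intro p hp q hq
      have := hvar p hp q hq
      zify
      simpa only [fold, Prod.map_fst, Prod.map_snd, Int.natCast_natAbs, sq_abs] using this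
  calc #S ≤ 4 * #(S.image fold) := Finset.card_le_mul_card_image S _ fiber_card
    _ ≤ 4 * (10 * H + 2) := by gcongr
    _ = 40 * H + 8 := by ring

/-- The tuples `(j, n₀, n₁, n₂)` contributing to the Fourier mode `e^{i(kx + lt)}` of
`(∑ j < L, e^{ijt}) (∑ n ∈ S, a n * e^{i(nx - n²t)})³`; the three frequencies are encoded as a
function on `Fin 3`. -/
def cubicResonances (L : ℕ) (S : Finset ℤ) (k l : ℤ) : Finset (ℕ × (Fin 3 → ℤ)) :=
  {i ∈ Finset.range L ×ˢ Fintype.piFinset (fun _ : Fin 3 => S) |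
    ∑ r, i.2 r = k ∧ (i.1 : ℤ) - ∑ r, i.2 r ^ 2 = l}

/-- The two differences in which `∑ r, n r ^ 2` is a definite quadratic form once `∑ r, n r` is
fixed. -/
def frequencyDifferences (n : Fin 3 → ℤ) : ℤ × ℤ :=
  (2 * n 0 - n 1 - n 2, n 1 - n 2)

lemma mem_cubicResonances {L : ℕ} {S : Finset ℤ} {k l : ℤ} {i : ℕ × (Fin 3 → ℤ)} :
    i ∈ cubicResonances L S k l ↔ i.1 < L ∧ (∀ r, i.2 r ∈ S) ∧ i.2 0 + i.2 1 + i.2 2 = k ∧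
      (i.1 : ℤ) - (i.2 0 ^ 2 + i.2 1 ^ 2 + i.2 2 ^ 2) = l := by
  simp only [cubicResonances, Finset.mem_filter, Finset.mem_product, Finset.mem_range,
    Fintype.mem_piFinset, Fin.sum_univ_three, and_assoc]

lemma frequencyDifferences_injOn_cubicResonances (L : ℕ) (S : Finset ℤ) (k l : ℤ) :
    Set.InjOn (fun i : ℕ × (Fin 3 → ℤ) => frequencyDifferences i.2)
      (cubicResonances L S k l) := by
  rintro ⟨j, m⟩ hi ⟨j', n⟩ hi' hdiff
  obtain ⟨-, -, hk, hl⟩ := mem_cubicResonances.1 hi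
  obtain ⟨-, -, hk', hl'⟩ := mem_cubicResonances.1 hi'
  obtain ⟨hx, hz⟩ := Prod.ext_iff.1 hdiff
  dsimp only [frequencyDifferences] at hk hl hk' hl' hx hz
  have h₀ : m 0 = n 0 := by omega
  have h₁ : m 1 = n 1 := by omega
  have h₂ : m 2 = n 2 := by omega
  have hmn : m = n := by ext r; fin_cases r <;> assumption
  have hj : j = j' := by rw [hmn] at hl; omega
  rw [hj, hmn]

lemma quadratic_frequencyDifferences {L : ℕ} {S : Finset ℤ} {k l : ℤ} {i : ℕ × (Fin 3 → ℤ)}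
    (hi : i ∈ cubicResonances L S k l) :
    (frequencyDifferences i.2).1 ^ 2 + 3 * (frequencyDifferences i.2).2 ^ 2
      = 6 * (i.1 - l) - 2 * k ^ 2 := by
  obtain ⟨-, -, hk, hl⟩ := mem_cubicResonances.1 hi
  rw [← hl, ← hk, frequencyDifferences]
  ring

lemma abs_frequencyDifferences_le {n : Fin 3 → ℤ} {B : ℤ} (hn : ∀ r r', n r - n r' ≤ B) :
    |(frequencyDifferences n).1| ≤ 2 * B ∧ |(frequencyDifferences n).2| ≤ 2 * B := by
  have h₀₁ := hn 0 1
  have h₀₂ := hn 0 2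
  have h₁₀ := hn 1 0
  have h₂₀ := hn 2 0
  simp only [frequencyDifferences, abs_le]
  omega

lemma card_cubicResonances_le {L : ℕ} (hL : 1 ≤ L) {S : Finset ℤ}
    (hS : ∀ m ∈ S, ∀ n ∈ S, m - n ≤ 3 * L) (k l : ℤ) :
    #(cubicResonances L S k l) ≤ 248 * L := by
  have hcard : #((cubicResonances L S k l).image fun i => frequencyDifferences i.2)
      ≤ 40 * (6 * L) + 8 := by
    refine card_le_of_quadratic_variation_le_int (α := 1) (β := 3) le_rfl (by norm_num) le_rfl
      _ ?_ ?_
    all_goals simp only [Finset.forall_mem_image]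
    · intro i hi
      have hmem := (mem_cubicResonances.1 hi).2.1
      have := abs_frequencyDifferences_le fun r r' => hS _ (hmem r) _ (hmem r')
      push_cast
      constructor <;> linarith
    · intro i hi i' hi'
      have hlt := (mem_cubicResonances.1 hi').1
      have hform := quadratic_frequencyDifferences hi
      have hform' := quadratic_frequencyDifferences hi'
      push_cast
      linarith
  rw [Finset.card_image_of_injOn (frequencyDifferences_injOn_cubicResonances L S k l)] at hcard
  linarith

end Counting

section TrigonometricSums
open scoped Finset ComplexConjugate
open Complex (I)

variable {ι : Type*}

lemma integral_cexp_int_mul (k : ℤ) :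
    ∫ y in (0 : ℝ)..(2 * π), Complex.exp (I * (k * y)) = if k = 0 then (2 * π : ℂ) else 0 := by
  split_ifs with hk
  · simp [hk]
  · have hIk : I * k ≠ 0 := mul_ne_zero Complex.I_ne_zero (Int.cast_ne_zero.2 hk)
    have hperiod : Complex.exp (I * k * (2 * π : ℝ)) = 1 :=
      Complex.exp_eq_one_iff.2 ⟨k, by push_cast; ring⟩
    simp only [← mul_assoc]
    rw [integral_exp_mul_complex hIk, hperiod]
    simp

lemma integral_norm_sq_sum_cexp (K : Finset ℤ) (b : ℤ → ℂ) :
    ∫ y in (0 : ℝ)..(2 * π), ‖∑ k ∈ K, b k * Complex.exp (I * (k * y))‖ ^ 2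
      = 2 * π * ∑ k ∈ K, ‖b k‖ ^ 2 := by
  have expand (y : ℝ) : ((‖∑ k ∈ K, b k * Complex.exp (I * (k * y))‖ ^ 2 : ℝ) : ℂ)
      = ∑ k ∈ K, ∑ l ∈ K, b k * conj (b l) * Complex.exp (I * ((k - l : ℤ) * y)) := by
    rw [Complex.ofReal_pow, ← Complex.mul_conj', map_sum, Finset.sum_mul_sum]
    refine Finset.sum_congr rfl fun k _ => Finset.sum_congr rfl fun l _ => ?_
    have hexp : Complex.exp (I * ((k - l : ℤ) * y))
        = Complex.exp (I * (k * y)) * conj (Complex.exp (I * (l * y))) := by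
      rw [← Complex.exp_conj, ← Complex.exp_add]
      simp only [map_mul, Complex.conj_I, Complex.conj_ofReal, map_intCast]
      push_cast
      ring_nf
    rw [hexp, map_mul]
    ring
  apply Complex.ofReal_injective
  rw [← intervalIntegral.integral_ofReal]
  simp only [expand]
  rw [intervalIntegral.integral_finsetSum fun k _ => by
    apply Continuous.intervalIntegrable; fun_prop]
  rw [Finset.mul_sum, Complex.ofReal_sum]
  refine Finset.sum_congr rfl fun k hk => ?_
  rw [intervalIntegral.integral_finsetSum fun l _ => by
    apply Continuous.intervalIntegrable; fun_prop]
  simp only [intervalIntegral.integral_const_mul, integral_cexp_int_mul, sub_eq_zero, mul_ite,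
    mul_zero, Finset.sum_ite_eq, if_pos hk, Complex.mul_conj']
  push_cast
  ring

lemma integral_norm_sq_sum_cexp_comp (s : Finset ι) (c : ι → ℂ) (p : ι → ℤ) :
    ∫ y in (0 : ℝ)..(2 * π), ‖∑ i ∈ s, c i * Complex.exp (I * (p i * y))‖ ^ 2
      = 2 * π * ∑ k ∈ s.image p, ‖∑ i ∈ s with p i = k, c i‖ ^ 2 := by
  rw [← integral_norm_sq_sum_cexp]
  refine intervalIntegral.integral_congr fun y _ => ?_
  rw [← Finset.sum_fiberwise_of_maps_to fun i => Finset.mem_image_of_mem p]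
  congr 2
  refine Finset.sum_congr rfl fun k _ => ?_
  rw [Finset.sum_mul]
  refine Finset.sum_congr rfl fun i hi => ?_
  rw [(Finset.mem_filter.1 hi).2]

lemma norm_sum_sq_le_card_mul_sum_norm_sq {E : Type*} [SeminormedAddCommGroup E]
    (s : Finset ι) (c : ι → E) : ‖∑ i ∈ s, c i‖ ^ 2 ≤ #s * ∑ i ∈ s, ‖c i‖ ^ 2 :=
  (pow_le_pow_left₀ (norm_nonneg _) (norm_sum_le s c) 2).trans sq_sum_le_card_mul_sum_sq

lemma integral_integral_norm_sq_sum_cexp_le (s : Finset ι) (c : ι → ℂ) (p q : ι → ℤ) {P : ℕ}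
    (hP : ∀ k l, #{i ∈ s | p i = k ∧ q i = l} ≤ P) :
    ∫ t in (0 : ℝ)..(2 * π), ∫ y in (0 : ℝ)..(2 * π),
        ‖∑ i ∈ s, c i * Complex.exp (I * (q i * t)) * Complex.exp (I * (p i * y))‖ ^ 2
      ≤ (2 * π) ^ 2 * (P * ∑ i ∈ s, ‖c i‖ ^ 2) := by
  have parseval : ∫ t in (0 : ℝ)..(2 * π), ∫ y in (0 : ℝ)..(2 * π),
        ‖∑ i ∈ s, c i * Complex.exp (I * (q i * t)) * Complex.exp (I * (p i * y))‖ ^ 2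
      = (2 * π) ^ 2 * ∑ k ∈ s.image p, ∑ l ∈ {i ∈ s | p i = k}.image q,
          ‖∑ i ∈ s with p i = k ∧ q i = l, c i‖ ^ 2 := by
    simp only [integral_norm_sq_sum_cexp_comp, intervalIntegral.integral_const_mul]
    rw [intervalIntegral.integral_finsetSum fun k _ => by
      apply Continuous.intervalIntegrable; fun_prop]
    simp only [integral_norm_sq_sum_cexp_comp, ← Finset.mul_sum, Finset.filter_filter]
    ring
  rw [parseval]
  gcongr
  calc ∑ k ∈ s.image p, ∑ l ∈ {i ∈ s | p i = k}.image q, ‖∑ i ∈ s with p i = k ∧ q i = l, c i‖ ^ 2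
      ≤ ∑ k ∈ s.image p, ∑ l ∈ {i ∈ s | p i = k}.image q,
          P * ∑ i ∈ s with p i = k ∧ q i = l, ‖c i‖ ^ 2 := by
        gcongr with k _ l _
        refine (norm_sum_sq_le_card_mul_sum_norm_sq _ c).trans ?_
        gcongr
        exact hP k l
    _ = P * ∑ k ∈ s.image p, ∑ i ∈ s with p i = k, ‖c i‖ ^ 2 := by
        simp only [← Finset.mul_sum, ← Finset.filter_filter]
        congr 1
        exact Finset.sum_congr rfl fun k _ =>
          Finset.sum_fiberwise_of_maps_to (fun i => Finset.mem_image_of_mem q) _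
    _ = P * ∑ i ∈ s, ‖c i‖ ^ 2 := by
        rw [Finset.sum_fiberwise_of_maps_to fun i => Finset.mem_image_of_mem p]

end TrigonometricSums

section Scaling

variable {E : Type*} [NormedAddCommGroup E] [NormedSpace ℝ E] {lam : ℝ}

lemma integral_comp_div_mul (hlam : lam ≠ 0) (P : ℝ) (F : ℝ → E) :
    ∫ x in (0 : ℝ)..(P * lam), F (x / lam) = lam • ∫ y in (0 : ℝ)..P, F y := by
  rw [intervalIntegral.integral_comp_div F hlam, zero_div, mul_div_cancel_right₀ _ hlam]

lemma integral_integral_comp_parabolic_rescale (hlam : lam ≠ 0) (T P : ℝ) (F : ℝ → ℝ → E) :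
    ∫ t in (0 : ℝ)..T, ∫ x in (0 : ℝ)..(P * lam), F (t / lam ^ 2) (x / lam)
      = lam ^ 3 • ∫ s in (0 : ℝ)..(T / lam ^ 2), ∫ y in (0 : ℝ)..P, F s y := by
  simp only [integral_comp_div_mul hlam, intervalIntegral.integral_smul]
  rw [intervalIntegral.integral_comp_div (fun s => ∫ y in (0 : ℝ)..P, F s y)
    (pow_ne_zero 2 hlam), zero_div, smul_smul, ← pow_succ']

lemma rpow_one_sixth_le_mul_rpow_half {A B K : ℝ} (hA : 0 ≤ A) (hB : 0 ≤ B) (hK : 0 ≤ K)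
    (h : A ≤ K * B ^ 3) : A ^ ((1 : ℝ) / 6) ≤ K ^ ((1 : ℝ) / 6) * B ^ ((1 : ℝ) / 2) := by
  calc A ^ ((1 : ℝ) / 6) ≤ (K * B ^ 3) ^ ((1 : ℝ) / 6) := by gcongr
    _ = K ^ ((1 : ℝ) / 6) * B ^ ((1 : ℝ) / 2) := by
        rw [mul_rpow hK (pow_nonneg hB 3), ← rpow_natCast_mul hB]
        norm_num

end Scaling

section FreeWave
open Complex (I)

/-- The free Schrödinger evolution `e^{it∂ₓ²} f` on the circle of period `2π`, for the
trigonometric polynomial `f(x) = ∑ n ∈ S, a n * e^{inx}`. -/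
noncomputable def freeWave (S : Finset ℤ) (a : ℤ → ℂ) (t x : ℝ) : ℂ :=
  ∑ n ∈ S, a n * Complex.exp (I * (n * x - n ^ 2 * t))

/-- The one-sided Dirichlet kernel `1 + e^{it} + ⋯ + e^{i(L-1)t}`, used as a majorant of the
indicator of a time interval of length `1 / L`. -/
noncomputable def dirichletKernel (L : ℕ) (t : ℝ) : ℂ :=
  ∑ j ∈ Finset.range L, Complex.exp (I * (j * t))

lemma continuous_dirichletKernel (L : ℕ) : Continuous (dirichletKernel L) := by
  unfold dirichletKernel
  fun_prop

lemma continuous_freeWave (S : Finset ℤ) (a : ℤ → ℂ) :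
    Continuous (Function.uncurry (freeWave S a)) := by
  simp only [Function.uncurry_def, freeWave]
  fun_prop

lemma integral_norm_sq_freeWave_zero (S : Finset ℤ) (a : ℤ → ℂ) :
    ∫ x in (0 : ℝ)..(2 * π), ‖freeWave S a 0 x‖ ^ 2 = 2 * π * ∑ n ∈ S, ‖a n‖ ^ 2 := by
  simp only [freeWave, Complex.ofReal_zero, mul_zero, sub_zero, integral_norm_sq_sum_cexp]

lemma le_norm_dirichletKernel {L : ℕ} {t : ℝ} (ht : |t| * L ≤ 1) :
    (L : ℝ) / 2 ≤ ‖dirichletKernel L t‖ := by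
  have half_le_re : ∀ j ∈ Finset.range L, (1 / 2 : ℝ) ≤ (Complex.exp (I * (j * t))).re := by
    intro j hj
    have hjL : (j : ℝ) ≤ L := Nat.cast_le.2 (Finset.mem_range.1 hj).le
    have habs : |j * t| ≤ 1 := by
      rw [abs_mul, Nat.abs_cast, mul_comm]
      exact (mul_le_mul_of_nonneg_left hjL (abs_nonneg t)).trans ht
    calc (1 / 2 : ℝ) ≤ 1 - (j * t) ^ 2 / 2 := by linarith [(sq_le_one_iff_abs_le_one _).2 habs]
      _ ≤ cos (j * t) := one_sub_sq_div_two_le_cos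
      _ = (Complex.exp (I * (j * t))).re := by
          rw [mul_comm I, ← Complex.exp_ofReal_mul_I_re]
          push_cast
          rfl
  calc (L : ℝ) / 2 = ∑ j ∈ Finset.range L, (1 / 2 : ℝ) := by simp [div_eq_mul_inv]
    _ ≤ (dirichletKernel L t).re := by
        rw [dirichletKernel, Complex.re_sum]
        exact Finset.sum_le_sum half_le_re
    _ ≤ ‖dirichletKernel L t‖ := Complex.re_le_norm _

lemma freeWave_pow (S : Finset ℤ) (a : ℤ → ℂ) (d : ℕ) (t x : ℝ) :
    freeWave S a t x ^ d = ∑ n ∈ Fintype.piFinset (fun _ : Fin d => S), (∏ r, a (n r)) *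
      Complex.exp (I * ((∑ r, n r : ℤ) * x - (∑ r, n r ^ 2 : ℤ) * t)) := by
  rw [freeWave, Finset.sum_pow']
  refine Finset.sum_congr rfl fun n _ => ?_
  rw [Finset.prod_mul_distrib, ← Complex.exp_sum]
  push_cast
  rw [← Finset.mul_sum, Finset.sum_sub_distrib, Finset.sum_mul, Finset.sum_mul]

lemma dirichletKernel_mul_freeWave_pow (L : ℕ) (S : Finset ℤ) (a : ℤ → ℂ) (d : ℕ) (t x : ℝ) :
    dirichletKernel L t * freeWave S a t x ^ d
      = ∑ i ∈ Finset.range L ×ˢ Fintype.piFinset (fun _ : Fin d => S), (∏ r, a (i.2 r)) *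
          Complex.exp (I * ((i.1 - ∑ r, i.2 r ^ 2 : ℤ) * t)) *
            Complex.exp (I * ((∑ r, i.2 r : ℤ) * x)) := by
  rw [dirichletKernel, freeWave_pow, Finset.sum_mul_sum, ← Finset.sum_product']
  refine Finset.sum_congr rfl fun i _ => ?_
  rw [mul_left_comm, mul_assoc, ← Complex.exp_add, ← Complex.exp_add]
  push_cast
  ring_nf

lemma sum_norm_prod_sq (L : ℕ) (S : Finset ℤ) (a : ℤ → ℂ) (d : ℕ) :
    ∑ i ∈ Finset.range L ×ˢ Fintype.piFinset (fun _ : Fin d => S), ‖∏ r, a (i.2 r)‖ ^ 2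
      = L * (∑ n ∈ S, ‖a n‖ ^ 2) ^ d := by
  rw [Finset.sum_pow']
  simp only [Finset.sum_product, norm_prod, ← Finset.prod_pow, Finset.sum_const,
    Finset.card_range, nsmul_eq_mul]

lemma integral_norm_sq_dirichletKernel_mul_freeWave_cube_le {L : ℕ} (hL : 1 ≤ L) (S : Finset ℤ)
    (hS : ∀ m ∈ S, ∀ n ∈ S, m - n ≤ 3 * L) (a : ℤ → ℂ) :
    ∫ t in (0 : ℝ)..(2 * π), ∫ x in (0 : ℝ)..(2 * π),
        ‖dirichletKernel L t * freeWave S a t x ^ 3‖ ^ 2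
      ≤ 992 * π ^ 2 * L ^ 2 * (∑ n ∈ S, ‖a n‖ ^ 2) ^ 3 := by
  simp only [dirichletKernel_mul_freeWave_pow]
  refine (integral_integral_norm_sq_sum_cexp_le _ _ _ _
    (card_cubicResonances_le hL hS)).trans_eq ?_
  rw [sum_norm_prod_sq]
  push_cast
  ring

lemma integral_norm_pow_six_freeWave_le_dirichletKernel {L : ℕ} (hL : 1 ≤ L) (S : Finset ℤ)
    (a : ℤ → ℂ) {T : ℝ} (hT : 0 ≤ T) (hTL : T * L ≤ 1) :
    ∫ t in (0 : ℝ)..T, ∫ x in (0 : ℝ)..(2 * π), ‖freeWave S a t x‖ ^ 6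
      ≤ 4 / L ^ 2 * ∫ t in (0 : ℝ)..(2 * π), ∫ x in (0 : ℝ)..(2 * π),
          ‖dirichletKernel L t * freeWave S a t x ^ 3‖ ^ 2 := by
  have hL' : (1 : ℝ) ≤ L := Nat.one_le_cast.2 hL
  have hT2π : T ≤ 2 * π := by nlinarith [pi_gt_three]
  set f : ℝ → ℝ := fun t => ∫ x in (0 : ℝ)..(2 * π), ‖freeWave S a t x‖ ^ 6
  set g : ℝ → ℝ := fun t =>
    ∫ x in (0 : ℝ)..(2 * π), ‖dirichletKernel L t * freeWave S a t x ^ 3‖ ^ 2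
  have hf : Continuous f := intervalIntegral.continuous_parametric_intervalIntegral_of_continuous'
    ((continuous_freeWave S a).norm.pow 6) _ _
  have f_nonneg (t : ℝ) : 0 ≤ f t :=
    intervalIntegral.integral_nonneg two_pi_pos.le fun x _ => by positivity
  have g_eq (t : ℝ) : g t = ‖dirichletKernel L t‖ ^ 2 * f t := by
    simp only [f, g, ← intervalIntegral.integral_const_mul, norm_mul, norm_pow, mul_pow, ← pow_mul]
  have hg : Continuous g := by
    rw [funext g_eq]
    exact ((continuous_dirichletKernel L).norm.pow 2).mul hf
  have g_nonneg (t : ℝ) : 0 ≤ g t := g_eq t ▸ mul_nonneg (sq_nonneg _) (f_nonneg t)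
  have f_le_g : ∀ t ∈ Set.Icc 0 T, f t ≤ 4 / L ^ 2 * g t := by
    intro t ht
    have hD : (L : ℝ) / 2 ≤ ‖dirichletKernel L t‖ :=
      le_norm_dirichletKernel (by rw [abs_of_nonneg ht.1]; nlinarith [ht.2])
    calc f t = 4 / L ^ 2 * ((L / 2) ^ 2 * f t) := by field_simp; norm_num
      _ ≤ 4 / L ^ 2 * g t := by
          rw [g_eq]
          gcongr
          exact f_nonneg t
  calc ∫ t in (0 : ℝ)..T, f t
      ≤ ∫ t in (0 : ℝ)..T, 4 / L ^ 2 * g t :=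
        intervalIntegral.integral_mono_on hT (hf.intervalIntegrable _ _)
          ((hg.const_mul _).intervalIntegrable _ _) f_le_g
    _ = 4 / L ^ 2 * ∫ t in (0 : ℝ)..T, g t := intervalIntegral.integral_const_mul _ _
    _ ≤ 4 / L ^ 2 * ∫ t in (0 : ℝ)..(2 * π), g t := by
        gcongr
        exact intervalIntegral.integral_mono_interval le_rfl hT hT2π
          (Filter.Eventually.of_forall g_nonneg) (hg.intervalIntegrable _ _)

lemma integral_norm_pow_six_freeWave_le {L : ℕ} (hL : 1 ≤ L) (S : Finset ℤ)
    (hS : ∀ m ∈ S, ∀ n ∈ S, m - n ≤ 3 * L) (a : ℤ → ℂ) {T : ℝ} (hT : 0 ≤ T) (hTL : T * L ≤ 1) :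
    ∫ t in (0 : ℝ)..T, ∫ x in (0 : ℝ)..(2 * π), ‖freeWave S a t x‖ ^ 6
      ≤ 496 / π * (∫ x in (0 : ℝ)..(2 * π), ‖freeWave S a 0 x‖ ^ 2) ^ 3 := by
  have hL0 : (L : ℝ) ≠ 0 := Nat.cast_ne_zero.2 (Nat.one_le_iff_ne_zero.1 hL)
  calc ∫ t in (0 : ℝ)..T, ∫ x in (0 : ℝ)..(2 * π), ‖freeWave S a t x‖ ^ 6
      ≤ 4 / L ^ 2 * ∫ t in (0 : ℝ)..(2 * π), ∫ x in (0 : ℝ)..(2 * π),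
          ‖dirichletKernel L t * freeWave S a t x ^ 3‖ ^ 2 :=
        integral_norm_pow_six_freeWave_le_dirichletKernel hL S a hT hTL
    _ ≤ 4 / L ^ 2 * (992 * π ^ 2 * L ^ 2 * (∑ n ∈ S, ‖a n‖ ^ 2) ^ 3) := by
        gcongr
        exact integral_norm_sq_dirichletKernel_mul_freeWave_cube_le hL S hS a
    _ = 496 / π * (∫ x in (0 : ℝ)..(2 * π), ‖freeWave S a 0 x‖ ^ 2) ^ 3 := by
        rw [integral_norm_sq_freeWave_zero]
        field_simp
        ring

lemma integral_norm_pow_six_rescaled_freeWave_le {lam N c : ℝ} (hlam : 0 < lam)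
    (hN : 1 ≤ N * lam) (S : Finset ℤ) (hS : ∀ n ∈ S, |n - c| ≤ N * lam) (a : ℤ → ℂ) :
    ∫ t in (0 : ℝ)..(lam / N), ∫ x in (0 : ℝ)..(2 * π * lam),
        ‖freeWave S a (t / lam ^ 2) (x / lam)‖ ^ 6
      ≤ 496 / π * (∫ x in (0 : ℝ)..(2 * π * lam), ‖freeWave S a 0 (x / lam)‖ ^ 2) ^ 3 := by
  have hN0 : 0 < N := pos_of_mul_pos_left (zero_lt_one.trans_le hN) hlam.le
  set L := ⌊N * lam⌋₊
  have hL : 1 ≤ L := Nat.one_le_floor_iff _ |>.2 hN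
  have hS' : ∀ m ∈ S, ∀ n ∈ S, m - n ≤ 3 * L := by
    intro m hm n hn
    have hreal : (m - n : ℝ) < 2 * (L + 1) := by
      have hfloor : N * lam < L + 1 := Nat.lt_floor_add_one _
      linarith [(abs_le.1 (hS m hm)).2, (abs_le.1 (hS n hn)).1]
    have hint : m - n < 2 * ((L : ℤ) + 1) := by exact_mod_cast hreal
    omega
  have hTL : lam / N / lam ^ 2 * L ≤ 1 := by
    calc lam / N / lam ^ 2 * L ≤ lam / N / lam ^ 2 * (N * lam) := by
          gcongr
          exact Nat.floor_le (by positivity)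
      _ = 1 := by field_simp
  rw [integral_integral_comp_parabolic_rescale hlam.ne' _ _ fun t x => ‖freeWave S a t x‖ ^ 6,
    integral_comp_div_mul hlam.ne' _ fun x => ‖freeWave S a 0 x‖ ^ 2, smul_eq_mul, smul_eq_mul,
    mul_pow, mul_left_comm]
  gcongr
  exact integral_norm_pow_six_freeWave_le hL S hS' a (by positivity) hTL

end FreeWave

/-- Only differences of frequencies enter the count, so the frequency window may be centred at
any `c` (Galilean invariance). -/
theorem linear_L6_strichartz_long_time_general :
    ∃ C : ℝ, 0 < C ∧
      ∀ (lam N c : ℝ), 0 < lam → 1 ≤ N * lam →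
      ∀ (a : ℤ →₀ ℂ),
        (∀ n : ℤ, ¬ |(n : ℝ) - c| ≤ N * lam → a n = 0) →
      ∀ (u : ℝ → ℝ → ℂ),
        (∀ t x : ℝ, u t x = ∑ n ∈ a.support, a n *
          Complex.exp (Complex.I *
            ((n : ℂ) * (x : ℂ) / (lam : ℂ) - (n : ℂ) ^ 2 * (t : ℂ) / (lam : ℂ) ^ 2))) →
        (∫ t in (0:ℝ)..(lam / N), ∫ x in (0:ℝ)..(2 * π * lam),
            ‖u t x‖ ^ 6) ^ ((1:ℝ)/6) ≤
          C * (∫ x in (0:ℝ)..(2 * π * lam), ‖u 0 x‖ ^ 2) ^ ((1:ℝ)/2) := by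
  refine ⟨(496 / π) ^ ((1 : ℝ) / 6), by positivity, fun lam N c hlam hN a ha u hu => ?_⟩
  have hN0 : 0 < N := pos_of_mul_pos_left (zero_lt_one.trans_le hN) hlam.le
  have u_eq (t x : ℝ) : u t x = freeWave a.support a (t / lam ^ 2) (x / lam) := by
    rw [hu, freeWave]
    push_cast
    simp only [mul_div_assoc]
  have hsupp : ∀ n ∈ a.support, |(n : ℝ) - c| ≤ N * lam := fun n hn =>
    not_imp_comm.1 (ha n) (Finsupp.mem_support_iff.1 hn)
  refine rpow_one_sixth_le_mul_rpow_half ?_ ?_ (by positivity) ?_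
  · exact intervalIntegral.integral_nonneg (by positivity) fun t _ =>
      intervalIntegral.integral_nonneg (by positivity) fun x _ => by positivity
  · exact intervalIntegral.integral_nonneg (by positivity) fun x _ => by positivity
  · simpa only [u_eq, zero_div] using
      integral_norm_pow_six_rescaled_freeWave_le hlam hN a.support hsupp a

/-- Scale-invariant `L⁶` Strichartz estimate without derivative loss on the rescaled torus
`𝕋_λ = ℝ/(2πλℤ)` for free Schrödinger waves with frequencies at most `M ≤ N`, on the
time interval `[0, λ/N]`. -/
theorem linear_L6_strichartz_long_time :
    ∃ C : ℝ, 0 < C ∧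
      ∀ (lam M N : ℝ), 1 ≤ lam → 1 ≤ M → M ≤ N →
      ∀ (a : ℤ →₀ ℂ),
        (∀ n : ℤ, ¬ |(n : ℝ)| ≤ M * lam → a n = 0) →
      ∀ (u : ℝ → ℝ → ℂ),
        (∀ t x : ℝ, u t x = ∑ n ∈ a.support, a n *
          Complex.exp (Complex.I *
            ((n : ℂ) * (x : ℂ) / (lam : ℂ) - (n : ℂ) ^ 2 * (t : ℂ) / (lam : ℂ) ^ 2))) →
        (∫ t in (0:ℝ)..(lam / N), ∫ x in (0:ℝ)..(2 * π * lam),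
            ‖u t x‖ ^ 6) ^ ((1:ℝ)/6) ≤
          C * (∫ x in (0:ℝ)..(2 * π * lam), ‖u 0 x‖ ^ 2) ^ ((1:ℝ)/2) := by
  obtain ⟨C, hC, h⟩ := linear_L6_strichartz_long_time_general
  exact ⟨C, hC, fun lam M N hlam hM hMN a ha =>
    h lam N 0 (by linarith) (by nlinarith) a fun n hn =>
      ha n fun hle => hn (by rw [sub_zero]; nlinarith)⟩
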